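/- Let ρ > 1 and let μ be a ρ-robust randomized online bidding strategy. Then for every T > 0, the expected number of bids the strategy ever makes in the interval [T, (2ρ−1)·T) satisfies 1/2 ≤ E_μ[#{n ∈ ℤ : T ≤ Q_n < (2ρ−1)·T}] ≤ ρ·(2ρ−1). -/

import Mathlib

/-!
The upper bound compares counts with costs: a bid in `[T, (2ρ-1)T)` contributes at least `T` to the
cost at target `(2ρ-1)T`, whose expectation is at most `ρ(2ρ-1)T`.

For the lower bound, finiteness of the cost at all integer targets and at `T` forces almost every
`Q` to have bids below and at or above `T` (`pathCost_eq_top`), so there is a first bid `Q_N ≥ T`,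
which is paid for at target `T`. Either `Q_N < (2ρ-1)T`, and it is counted, or the cost at `T` is at
least `(2ρ-1)T`. In both cases `cost + (2ρ-2)T · count ≥ (2ρ-1)T` (`le_pathCost_add_bidCount`), and
taking expectations with `E[cost] ≤ ρT` gives `E[count] ≥ (ρ-1)/(2ρ-2) = 1/2`.
-/

open MeasureTheory Set
open scoped ENNReal

/-- The expected cost of a randomized online bidding strategy `μ` at target `T`:
`E_μ[∑_{n∈ℤ} Q_n · 1{Q_{n−1} < T}]`. -/
noncomputable def bidCost (μ : Measure (ℤ → ℝ)) (T : ℝ) : ℝ≥0∞ :=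
  ∫⁻ Q, ∑' n : ℤ, (if Q (n - 1) < T then ENNReal.ofReal (Q n) else 0) ∂μ

/-- A randomized online bidding strategy: a probability measure on bid sequences that are
almost surely positive and strictly increasing. -/
def IsBidStrategy (μ : Measure (ℤ → ℝ)) : Prop :=
  IsProbabilityMeasure μ ∧ ∀ᵐ Q ∂μ, (∀ n : ℤ, 0 < Q n) ∧ StrictMono Q

/-- The cost of a deterministic bid sequence at target `T`. -/
noncomputable def pathCost (T : ℝ) (Q : ℤ → ℝ) : ℝ≥0∞ :=
  ∑' n : ℤ, (if Q (n - 1) < T then ENNReal.ofReal (Q n) else 0)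

/-- The number of bids of a deterministic sequence in `[a, b)`. -/
noncomputable def bidCount (a b : ℝ) (Q : ℤ → ℝ) : ℝ≥0∞ :=
  ∑' n : ℤ, (if a ≤ Q n ∧ Q n < b then (1 : ℝ≥0∞) else 0)

lemma measurable_pathCost (T : ℝ) : Measurable (pathCost T) := by
  refine Measurable.tsum fun n => Measurable.ite ?_ ?_ measurable_const
  · exact measurableSet_lt (measurable_pi_apply _) measurable_const
  · exact (measurable_pi_apply n).ennreal_ofReal

lemma measurable_bidCount (a b : ℝ) : Measurable (bidCount a b) := by
  refine Measurable.tsum fun n => Measurable.ite ?_ measurable_const measurable_const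
  exact (measurableSet_le measurable_const (measurable_pi_apply _)).inter
    (measurableSet_lt (measurable_pi_apply _) measurable_const)

/-- Infinitely many bids that are paid for and bounded away from `0` make the cost infinite. -/
lemma pathCost_eq_top {T c : ℝ} {Q : ℤ → ℝ} (hc : 0 < c) (f : ℕ → ℤ)
    (hf : Function.Injective f) (h1 : ∀ m, Q (f m - 1) < T) (h2 : ∀ m, c ≤ Q (f m)) :
    pathCost T Q = ⊤ := by
  have h0 : (∑' _ : ℕ, ENNReal.ofReal c) = ⊤ :=
    ENNReal.tsum_const_eq_top_of_ne_zero (by simpa using hc)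
  rw [eq_top_iff, ← h0]
  refine le_trans (ENNReal.tsum_le_tsum fun m => ?_) (ENNReal.tsum_comp_le_tsum_of_injective hf _)
  simp only [h1 m, if_true]
  exact ENNReal.ofReal_le_ofReal (h2 m)

lemma ofReal_le_pathCost {T : ℝ} {Q : ℤ → ℝ} (n : ℤ) (h : Q (n - 1) < T) :
    ENNReal.ofReal (Q n) ≤ pathCost T Q := by
  have := ENNReal.le_tsum (f := fun n : ℤ => if Q (n - 1) < T then ENNReal.ofReal (Q n) else 0) n
  simpa only [pathCost, h, if_true] using this

/-- Finite cost at `T` forbids all bids to be below `T`, and finite cost at a target above `Q 0`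
forbids all bids to be at least `T`, so a least index with `T ≤ Q n` exists. -/
lemma exists_first_bid {T : ℝ} (hT : 0 < T) {Q : ℤ → ℝ} (hpos : ∀ n, 0 < Q n)
    (hmono : StrictMono Q) (hfinT : pathCost T Q < ⊤)
    (hfin : ∀ k : ℕ, pathCost (k + 1 : ℝ) Q < ⊤) :
    ∃ n, Q (n - 1) < T ∧ T ≤ Q n := by
  have hup : ∃ n, T ≤ Q n := by
    by_contra! h
    exact hfinT.ne (pathCost_eq_top (hpos 0) (fun m : ℕ => (m : ℤ)) Nat.cast_injective
      (fun m => h _) (fun m => hmono.monotone (by positivity)))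
  have hdown : ∃ n, Q n < T := by
    by_contra! h
    -- An integer target above `Q 0` is needed: the cost at `T` vanishes in this case.
    obtain ⟨k, hk⟩ := exists_nat_gt (Q 0)
    refine (hfin k).ne (pathCost_eq_top hT (fun m : ℕ => -(m : ℤ)) ?_ (fun m => ?_) (fun m => h _))
    · intro a b hab
      simpa using hab
    · have : Q (-(m : ℤ) - 1) ≤ Q 0 := hmono.monotone (by omega)
      linarith
  obtain ⟨b, hb⟩ := hdown
  obtain ⟨n, hn, hmin⟩ := Int.exists_least_of_bdd (P := fun n => T ≤ Q n)
    ⟨b, fun z hz => (hmono.lt_iff_lt.1 (hb.trans_le hz)).le⟩ hup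
  refine ⟨n, ?_, hn⟩
  by_contra! h
  have := hmin _ h
  omega

/-- The first bid at or above `T` is either counted or costs at least `(2 * ρ - 1) * T`. -/
lemma le_pathCost_add_bidCount {ρ T : ℝ} (hρ : 1 < ρ) (hT : 0 < T) {Q : ℤ → ℝ} {n : ℤ}
    (h1 : Q (n - 1) < T) (h2 : T ≤ Q n) :
    ENNReal.ofReal ((2 * ρ - 1) * T) ≤
      pathCost T Q + ENNReal.ofReal ((2 * ρ - 2) * T) * bidCount T ((2 * ρ - 1) * T) Q := by
  have hcost := ofReal_le_pathCost n h1
  by_cases h : Q n < (2 * ρ - 1) * T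
  · have hcount : 1 ≤ bidCount T ((2 * ρ - 1) * T) Q := by
      have := ENNReal.le_tsum (f := fun n : ℤ =>
        if T ≤ Q n ∧ Q n < (2 * ρ - 1) * T then (1 : ℝ≥0∞) else 0) n
      simpa only [bidCount, h2, h, and_self, if_true] using this
    calc ENNReal.ofReal ((2 * ρ - 1) * T)
        = ENNReal.ofReal T + ENNReal.ofReal ((2 * ρ - 2) * T) * 1 := by
          rw [mul_one, ← ENNReal.ofReal_add hT.le (mul_nonneg (by linarith) hT.le)]
          congr 1; ring
      _ ≤ _ := by
          gcongr
          exact (ENNReal.ofReal_le_ofReal h2).trans hcost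
  · exact ((ENNReal.ofReal_le_ofReal (not_lt.1 h)).trans hcost).trans le_self_add

/-- Each bid in `[a, b)` is paid for at target `b`, at a price of at least `a`. -/
lemma mul_bidCount_le_pathCost {a b : ℝ} {Q : ℤ → ℝ} (hmono : StrictMono Q) :
    ENNReal.ofReal a * bidCount a b Q ≤ pathCost b Q := by
  rw [bidCount, ← ENNReal.tsum_mul_left]
  refine ENNReal.tsum_le_tsum fun n => ?_
  split_ifs with h h'
  · simpa using ENNReal.ofReal_le_ofReal h.1
  · exact absurd ((hmono (by omega : n - 1 < n)).trans h.2) h'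
  · simp
  · simp

theorem robust_strategy_bid_density
    (ρ : ℝ) (hρ : 1 < ρ) (μ : Measure (ℤ → ℝ)) (hμ : IsBidStrategy μ)
    (hrobust : ∀ T > 0, bidCost μ T ≤ ENNReal.ofReal (ρ * T))
    (T : ℝ) (hT : 0 < T) :
    ENNReal.ofReal (1 / 2) ≤
      (∫⁻ Q, ∑' n : ℤ,
        (if T ≤ Q n ∧ Q n < (2 * ρ - 1) * T then (1 : ℝ≥0∞) else 0) ∂μ) ∧
    (∫⁻ Q, ∑' n : ℤ,
        (if T ≤ Q n ∧ Q n < (2 * ρ - 1) * T then (1 : ℝ≥0∞) else 0) ∂μ) ≤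
      ENNReal.ofReal (ρ * (2 * ρ - 1)) := by
  obtain ⟨hprob, hae⟩ := hμ
  change ENNReal.ofReal (1 / 2) ≤ (∫⁻ Q, bidCount T ((2 * ρ - 1) * T) Q ∂μ) ∧
    (∫⁻ Q, bidCount T ((2 * ρ - 1) * T) Q ∂μ) ≤ _
  have hrob : ∀ S > 0, (∫⁻ Q, pathCost S Q ∂μ) ≤ ENNReal.ofReal (ρ * S) := hrobust
  have hupper : ENNReal.ofReal T * (∫⁻ Q, bidCount T ((2 * ρ - 1) * T) Q ∂μ) ≤
      ENNReal.ofReal T * ENNReal.ofReal (ρ * (2 * ρ - 1)) := by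
    rw [← lintegral_const_mul _ (measurable_bidCount _ _), ← ENNReal.ofReal_mul hT.le]
    calc _ ≤ ∫⁻ Q, pathCost ((2 * ρ - 1) * T) Q ∂μ :=
          lintegral_mono_ae (hae.mono fun Q hQ => mul_bidCount_le_pathCost hQ.2)
      _ ≤ _ := hrob _ (mul_pos (by linarith) hT)
      _ = _ := by congr 1; ring
  have hupper' := (ENNReal.mul_le_mul_iff_right (by simpa using hT) ENNReal.ofReal_ne_top).1 hupper
  refine ⟨?_, hupper'⟩
  have hfin : ∀ S > 0, ∀ᵐ Q ∂μ, pathCost S Q < ⊤ := fun S hS =>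
    ae_lt_top (measurable_pathCost S) ((hrob S hS).trans_lt ENNReal.ofReal_lt_top).ne
  have hfinNat : ∀ᵐ Q ∂μ, ∀ k : ℕ, pathCost (k + 1 : ℝ) Q < ⊤ :=
    ae_all_iff.2 fun k => hfin _ (by positivity)
  have hlower : ENNReal.ofReal ((2 * ρ - 1) * T) ≤ ENNReal.ofReal (ρ * T) +
      ENNReal.ofReal ((2 * ρ - 2) * T) * (∫⁻ Q, bidCount T ((2 * ρ - 1) * T) Q ∂μ) := by
    calc ENNReal.ofReal ((2 * ρ - 1) * T) = ∫⁻ _, ENNReal.ofReal ((2 * ρ - 1) * T) ∂μ := by simp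
      _ ≤ ∫⁻ Q, (pathCost T Q +
            ENNReal.ofReal ((2 * ρ - 2) * T) * bidCount T ((2 * ρ - 1) * T) Q) ∂μ := by
          refine lintegral_mono_ae ?_
          filter_upwards [hae, hfin T hT, hfinNat] with Q hQ hQT hQk
          obtain ⟨n, h1, h2⟩ := exists_first_bid hT hQ.1 hQ.2 hQT hQk
          exact le_pathCost_add_bidCount hρ hT h1 h2
      _ ≤ _ := by
          rw [lintegral_add_left (measurable_pathCost T),
            lintegral_const_mul _ (measurable_bidCount _ _)]
          gcongr
          exact hrob T hT
  -- The expected count is finite by the upper bound, so the inequality can be read in `ℝ`.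
  have hne : (∫⁻ Q, bidCount T ((2 * ρ - 1) * T) Q ∂μ) ≠ ⊤ :=
    (hupper'.trans_lt ENNReal.ofReal_lt_top).ne
  generalize (∫⁻ Q, bidCount T ((2 * ρ - 1) * T) Q ∂μ) = E at hlower hne ⊢
  have hc : 0 < (2 * ρ - 2) * T := mul_pos (by linarith) hT
  have hE := ENNReal.toReal_nonneg (a := E)
  rw [← ENNReal.ofReal_toReal hne, ← ENNReal.ofReal_mul hc.le,
    ← ENNReal.ofReal_add (by positivity) (by positivity),
    ENNReal.ofReal_le_ofReal_iff (by positivity)] at hlower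
  rw [ENNReal.ofReal_le_iff_le_toReal hne]
  refine le_of_mul_le_mul_left ?_ hc
  linarith
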